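/- Let Ṽ ∈ O(m,r), Y ∈ ℝ^{n×m}, X ∈ ℝ^{n×p}, and let ρ(T;λ) = Σ_{j=1}^p φ(‖T_{j*}‖_2; λ) be a penalty where φ(·;λ) is nondecreasing in its first argument. If Â minimizes T ↦ ‖YṼṼ' − XT‖_F²/2 + ρ(T;λ) over T ∈ ℝ^{p×m}, then ÂṼṼ' is also a minimizer and achieves the same objective value; in particular there exists a minimizer Â satisfying ÂṼṼ' = Â. -/

import Mathlib

open MeasureTheory ProbabilityTheory Matrix Set
open scoped ENNReal NNReal

noncomputable section

/-- Euclidean (ℓ₂) norm of a finitely indexed real vector. -/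
def l2norm {I : Type*} [Fintype I] (v : I → ℝ) : ℝ := Real.sqrt (∑ i, v i ^ 2)

/-- Frobenius norm of a real matrix. -/
def frobNorm {I J : Type*} [Fintype I] [Fintype J] (M : Matrix I J ℝ) : ℝ :=
  Real.sqrt (∑ i, ∑ j, M i j ^ 2)

/-- ℓ₂/ℓ₁ norm: the sum of the ℓ₂ norms of the rows. -/
def norm21 {I J : Type*} [Fintype I] [Fintype J] (M : Matrix I J ℝ) : ℝ :=
  ∑ i, l2norm (M i)

open Classical in
/-- Row support: indices of nonzero rows. -/
def rowSupport {I J : Type*} [Fintype I] [Fintype J] (M : Matrix I J ℝ) : Finset I :=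
  Finset.univ.filter (fun i => M i ≠ 0)

/-- The j-th largest singular value (j ≥ 1), via the Courant–Fischer max–min
characterization: `σ_j(M) = max_{dim V = j} min_{v ∈ V, ‖v‖=1} ‖Mv‖`. -/
def singularValue {I J : Type*} [Fintype I] [Fintype J] (M : Matrix I J ℝ) (j : ℕ) : ℝ :=
  sSup { t | ∃ V : Submodule ℝ (J → ℝ), Module.finrank ℝ V = j ∧
    t = sInf { u | ∃ v ∈ V, l2norm v = 1 ∧ u = l2norm (M.mulVec v) } }

/-- Operator norm (largest singular value). -/
def opNorm {I J : Type*} [Fintype I] [Fintype J] (M : Matrix I J ℝ) : ℝ :=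
  sSup { t | ∃ v : J → ℝ, l2norm v = 1 ∧ t = l2norm (M.mulVec v) }

/-- Schatten-q norm. -/
def schattenNorm {I J : Type*} [Fintype I] [Fintype J] (M : Matrix I J ℝ) (q : ℝ) : ℝ :=
  (∑ i ∈ Finset.Icc 1 (min (Fintype.card I) (Fintype.card J)), singularValue M i ^ q) ^ (1 / q)

/-- Squared lower k-sparse Riesz constant `κ₋²(k)`:
the minimum over column subsets B with |B| = k of the smallest eigenvalue of X_B' X_B. -/
def kappaMinusSq {n p : ℕ} (X : Matrix (Fin n) (Fin p) ℝ) (k : ℕ) : ℝ :=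
  sInf { t | ∃ B : Finset (Fin p), B.card = k ∧ ∃ v : Fin p → ℝ,
    (∀ i, i ∉ B → v i = 0) ∧ l2norm v = 1 ∧ t = l2norm (X.mulVec v) ^ 2 }

/-- Squared upper k-sparse Riesz constant `κ₊²(k)`. -/
def kappaPlusSq {n p : ℕ} (X : Matrix (Fin n) (Fin p) ℝ) (k : ℕ) : ℝ :=
  sSup { t | ∃ B : Finset (Fin p), B.card = k ∧ ∃ v : Fin p → ℝ,
    (∀ i, i ∉ B → v i = 0) ∧ l2norm v = 1 ∧ t = l2norm (X.mulVec v) ^ 2 }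

def kappaMinus {n p : ℕ} (X : Matrix (Fin n) (Fin p) ℝ) (k : ℕ) : ℝ :=
  Real.sqrt (kappaMinusSq X k)

def kappaPlus {n p : ℕ} (X : Matrix (Fin n) (Fin p) ℝ) (k : ℕ) : ℝ :=
  Real.sqrt (kappaPlusSq X k)

/-- Membership in the parameter space Θ(s, r, d, γ): rank r, all nonzero singular values in
(d, γd], and at most s nonzero rows. (Singular values are automatically nonincreasing.) -/
def memTheta {p m : ℕ} (A : Matrix (Fin p) (Fin m) ℝ) (s r : ℕ) (d γ : ℝ) : Prop :=
  A.rank = r ∧ 0 < d ∧ singularValue A 1 ≤ γ * d ∧ d < singularValue A r ∧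
    (rowSupport A).card ≤ s

/-- `V` is a matrix of top-r right singular vectors of `M`: the columns of `V` are orthonormal
eigenvectors of `MᵀM`, the j-th column with eigenvalue `σ_j(M)²`. -/
def IsRightSingularVectors {I J : Type*} [Fintype I] [Fintype J] {r : ℕ}
    (M : Matrix I J ℝ) (V : Matrix J (Fin r) ℝ) : Prop :=
  Vᵀ * V = 1 ∧ ∀ j : Fin r,
    (Mᵀ * M).mulVec (fun i => V i j) = (singularValue M (j.1 + 1)) ^ 2 • (fun i => V i j)

/-- `U` is a matrix of top-r left singular vectors of `M`. -/
def IsLeftSingularVectors {I J : Type*} [Fintype I] [Fintype J] {r : ℕ}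
    (M : Matrix I J ℝ) (U : Matrix I (Fin r) ℝ) : Prop :=
  IsRightSingularVectors Mᵀ U

instance matrixMeasurableSpace {n m : ℕ} : MeasurableSpace (Matrix (Fin n) (Fin m) ℝ) :=
  (inferInstance : MeasurableSpace (Fin n → Fin m → ℝ))

/-- Law of an n×m random matrix with i.i.d. N(0, v) entries. -/
def gaussianMatrix (n m : ℕ) (v : ℝ≥0) : Measure (Matrix (Fin n) (Fin m) ℝ) :=
  Measure.pi fun _ : Fin n => Measure.pi fun _ : Fin m => gaussianReal 0 v

open Classical in
/-- Kullback–Leibler divergence D(P‖Q). -/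
def klDivM {Ω : Type*} [MeasurableSpace Ω] (P Q : Measure Ω) : ℝ≥0∞ :=
  if P ≪ Q ∧ Integrable (fun x => Real.log (P.rnDeriv Q x).toReal) P
  then ENNReal.ofReal (∫ x, Real.log (P.rnDeriv Q x).toReal ∂P)
  else ∞

/-- ε-packing number of T with respect to the distance ρ: the maximal cardinality of a subset
of T whose pairwise ρ-distances are all at least ε. -/
def packingNumber {α : Type*} (T : Set α) (ρ : α → α → ℝ) (ε : ℝ) : ℕ :=
  sSup { k | ∃ S : Finset α, ↑S ⊆ T ∧ (∀ x ∈ S, ∀ y ∈ S, x ≠ y → ε ≤ ρ x y) ∧ S.card = k }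

/-- Moore–Penrose pseudoinverse (characterized by the four Penrose equations). -/
def IsMoorePenrose {k : ℕ} (M Mi : Matrix (Fin k) (Fin k) ℝ) : Prop :=
  M * Mi * M = M ∧ Mi * M * Mi = Mi ∧ (M * Mi)ᵀ = M * Mi ∧ (Mi * M)ᵀ = Mi * M

/-!
Since `Y P - X (A P) = (Y P - X A) P`, multiplying `A` on the right by an orthogonal projection `P`
multiplies both the residual and the rows of `A` by `P`. An orthogonal projection is a contraction
in the `ℓ₂` norm, so neither the loss nor a penalty that is monotone in the row norms increases.
-/

section RowProjection

variable {m n p : Type*} [Fintype m]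

theorem l2norm_eq_norm (v : m → ℝ) : l2norm v = ‖WithLp.toLp 2 v‖ := by
  simp only [l2norm, EuclideanSpace.norm_eq, Real.norm_eq_abs, sq_abs]

theorem l2norm_nonneg (v : m → ℝ) : 0 ≤ l2norm v :=
  Real.sqrt_nonneg _

theorem l2norm_sq (v : m → ℝ) : l2norm v ^ 2 = ∑ i, v i ^ 2 :=
  Real.sq_sqrt (Finset.sum_nonneg fun _ _ => sq_nonneg _)

theorem frobNorm_eq_l2norm_row [Fintype n] (M : Matrix n m ℝ) :
    frobNorm M = l2norm fun i => l2norm (M i) := by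
  rw [frobNorm, l2norm]
  simp only [l2norm_sq]

theorem monotoneOn_l2norm : MonotoneOn (l2norm : (m → ℝ) → ℝ) (Ici 0) := fun _ hv _ _ hvw =>
  Real.sqrt_le_sqrt <| Finset.sum_le_sum fun i _ => pow_le_pow_left₀ (hv i) (hvw i) 2

theorem isStarProjection_mul_transpose {r : Type*} [Fintype r] [DecidableEq r]
    {V : Matrix m r ℝ} (hV : Vᵀ * V = 1) : IsStarProjection (V * Vᵀ) where
  isIdempotentElem := by
    rw [IsIdempotentElem, Matrix.mul_assoc, ← Matrix.mul_assoc Vᵀ, hV, Matrix.one_mul]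
  isSelfAdjoint := by
    rw [← conjTranspose_eq_transpose_of_trivial]
    exact isHermitian_mul_conjTranspose_self V

variable {P : Matrix m m ℝ}

open scoped Matrix.Norms.L2Operator in
theorem l2norm_vecMul_le (hP : IsStarProjection P) (v : m → ℝ) :
    l2norm (v ᵥ* P) ≤ l2norm v := by
  classical
  have hPt : Pᵀ = P := (conjTranspose_eq_transpose_of_trivial P).symm.trans hP.isSelfAdjoint
  rw [← hPt, vecMul_transpose, l2norm_eq_norm, l2norm_eq_norm]
  exact (l2_opNorm_mulVec P (WithLp.toLp 2 v)).trans
    (mul_le_of_le_one_left (norm_nonneg _) hP.norm_le)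

theorem l2norm_row_mul_le (hP : IsStarProjection P) (M : Matrix n m ℝ) (i : n) :
    l2norm ((M * P) i) ≤ l2norm (M i) := by
  rw [mul_apply_eq_vecMul]
  exact l2norm_vecMul_le hP (M i)

theorem frobNorm_mul_le [Fintype n] (hP : IsStarProjection P) (M : Matrix n m ℝ) :
    frobNorm (M * P) ≤ frobNorm M := by
  rw [frobNorm_eq_l2norm_row, frobNorm_eq_l2norm_row]
  exact monotoneOn_l2norm (fun _ => l2norm_nonneg _) (fun _ => l2norm_nonneg _)
    (l2norm_row_mul_le hP M)

variable [Fintype n] [Fintype p]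

/-- The objective `‖W - X T‖_F² / 2 + ρ (‖T₁‖₂, …, ‖T_p‖₂)` of multivariate regression with a
penalty on the rows `T_j` of the coefficient matrix. The penalty `ρ` takes the vector of all row
norms, so it need not be a sum over the rows. -/
def rowPenalizedLoss (W : Matrix n m ℝ) (X : Matrix n p ℝ) (ρ : (p → ℝ) → ℝ)
    (T : Matrix p m ℝ) : ℝ :=
  frobNorm (W - X * T) ^ 2 / 2 + ρ fun j => l2norm (T j)

theorem rowPenalizedLoss_mul_le (hP : IsStarProjection P) (Y : Matrix n m ℝ) (X : Matrix n p ℝ)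
    {ρ : (p → ℝ) → ℝ} (hρ : MonotoneOn ρ (Ici 0)) (A : Matrix p m ℝ) :
    rowPenalizedLoss (Y * P) X ρ (A * P) ≤ rowPenalizedLoss (Y * P) X ρ A := by
  have residual_mul : Y * P - X * (A * P) = (Y * P - X * A) * P := by
    rw [Matrix.sub_mul, Matrix.mul_assoc Y, hP.isIdempotentElem, Matrix.mul_assoc X]
  have loss_le : frobNorm (Y * P - X * (A * P)) ^ 2 ≤ frobNorm (Y * P - X * A) ^ 2 := by
    rw [residual_mul]
    exact pow_le_pow_left₀ (Real.sqrt_nonneg _) (frobNorm_mul_le hP _) 2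
  have penalty_le : ρ (fun j => l2norm ((A * P) j)) ≤ ρ fun j => l2norm (A j) :=
    hρ (fun _ => l2norm_nonneg _) (fun _ => l2norm_nonneg _) (l2norm_row_mul_le hP A)
  unfold rowPenalizedLoss
  gcongr

theorem stmt0_general (hP : IsStarProjection P) (Y : Matrix n m ℝ) (X : Matrix n p ℝ)
    {ρ : (p → ℝ) → ℝ} (hρ : MonotoneOn ρ (Ici 0)) {A : Matrix p m ℝ}
    (hA : ∀ T, rowPenalizedLoss (Y * P) X ρ A ≤ rowPenalizedLoss (Y * P) X ρ T) :
    (∀ T, rowPenalizedLoss (Y * P) X ρ (A * P) ≤ rowPenalizedLoss (Y * P) X ρ T) ∧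
    rowPenalizedLoss (Y * P) X ρ (A * P) = rowPenalizedLoss (Y * P) X ρ A ∧
    ∃ A' : Matrix p m ℝ, A' * P = A' ∧
      ∀ T, rowPenalizedLoss (Y * P) X ρ A' ≤ rowPenalizedLoss (Y * P) X ρ T := by
  have hAP := rowPenalizedLoss_mul_le hP Y X hρ A
  have hmin := fun T => hAP.trans (hA T)
  have hfix : A * P * P = A * P := by rw [Matrix.mul_assoc, hP.isIdempotentElem]
  exact ⟨hmin, hAP.antisymm (hA _), A * P, hfix, hmin⟩

end RowProjection

/-- If `Â` minimizes `T ↦ ‖YṼṼ' − XT‖_F²/2 + ρ(T;λ)` where the penalty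
`ρ(T;λ) = Σ_j φ(‖T_{j*}‖₂)` has `φ` nondecreasing, then `ÂṼṼ'` is also a minimizer and attains
the same objective value; in particular there is a minimizer `A'` with `A'ṼṼ' = A'`. -/
theorem stmt0 {n m p r : ℕ} (Y : Matrix (Fin n) (Fin m) ℝ) (X : Matrix (Fin n) (Fin p) ℝ)
    (Vt : Matrix (Fin m) (Fin r) ℝ) (hVt : Vtᵀ * Vt = 1)
    (φ : ℝ → ℝ) (hφ : Monotone φ)
    (Ahat : Matrix (Fin p) (Fin m) ℝ)
    (hmin : ∀ T : Matrix (Fin p) (Fin m) ℝ,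
      frobNorm (Y * Vt * Vtᵀ - X * Ahat) ^ 2 / 2 + ∑ j, φ (l2norm (Ahat j)) ≤
        frobNorm (Y * Vt * Vtᵀ - X * T) ^ 2 / 2 + ∑ j, φ (l2norm (T j))) :
    (∀ T : Matrix (Fin p) (Fin m) ℝ,
      frobNorm (Y * Vt * Vtᵀ - X * (Ahat * Vt * Vtᵀ)) ^ 2 / 2
          + ∑ j, φ (l2norm ((Ahat * Vt * Vtᵀ) j)) ≤
        frobNorm (Y * Vt * Vtᵀ - X * T) ^ 2 / 2 + ∑ j, φ (l2norm (T j))) ∧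
    (frobNorm (Y * Vt * Vtᵀ - X * (Ahat * Vt * Vtᵀ)) ^ 2 / 2
          + ∑ j, φ (l2norm ((Ahat * Vt * Vtᵀ) j)) =
        frobNorm (Y * Vt * Vtᵀ - X * Ahat) ^ 2 / 2 + ∑ j, φ (l2norm (Ahat j))) ∧
    (∃ A' : Matrix (Fin p) (Fin m) ℝ, A' * Vt * Vtᵀ = A' ∧
      ∀ T : Matrix (Fin p) (Fin m) ℝ,
        frobNorm (Y * Vt * Vtᵀ - X * A') ^ 2 / 2 + ∑ j, φ (l2norm (A' j)) ≤
          frobNorm (Y * Vt * Vtᵀ - X * T) ^ 2 / 2 + ∑ j, φ (l2norm (T j))) := by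
  simp only [Matrix.mul_assoc _ Vt] at hmin ⊢
  exact stmt0_general (isStarProjection_mul_transpose hVt) Y X
    (ρ := fun v => ∑ j, φ (v j)) (fun _ _ _ _ h => Finset.sum_le_sum fun j _ => hφ (h j)) hmin

end
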